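/- Let ε₀ > 0 and let Φ : (0, ε₀] → B(𝓗) be a continuously differentiable function (in operator norm) with values in the bounded operators on a complex Hilbert space 𝓗. Let θ₁, θ₂ : (0, ε₀) → [0, ∞) be measurable functions with ∫₀^{ε₀} θ_k(ε) dε < ∞ for k = 1, 2, and let γ ≥ 0. If ‖Φ'(ε)‖ ≤ θ₁(ε) + θ₂(ε)·‖Φ(ε)‖^{1/2} + γ·‖Φ(ε)‖ for all ε ∈ (0, ε₀), then for every ε ∈ (0, ε₀]: ‖Φ(ε)‖ ≤ [ (‖Φ(ε₀)‖ + ∫₀^{ε₀} θ₁(ε') dε')^{1/2} + ∫₀^{ε₀} θ₂(ε') dε' ]² · e^{γ ε₀}. -/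

import Mathlib

open MeasureTheory Set

/-! The norm is convex, so `‖f‖` has a right derivative wherever `f` does, of absolute value at
most `‖f'‖`. Hence the weighted norm `v(ε) = exp (γ (ε - b)) ‖f ε‖` has right derivative at
least `-exp (γ (ε - b)) (θ₁ + θ₂ √‖f‖)`: the weight absorbs the term `γ ‖f‖`. Integrating from a
maximum point of `v` on `[ε, b]` up to `b`, and bounding the weighted square root by `r = √(max v)`,
gives the quadratic inequality `r² ≤ (‖f b‖ + ∫ θ₁) + r ∫ θ₂`, whence
`r ≤ √(‖f b‖ + ∫ θ₁) + ∫ θ₂`. -/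

lemma mul_sqrt_le_sqrt_mul {w : ℝ} (hw₀ : 0 ≤ w) (hw₁ : w ≤ 1) (u : ℝ) :
    w * √u ≤ √(w * u) := by
  rw [Real.sqrt_mul hw₀]
  gcongr
  exact Real.le_sqrt_of_sq_le (pow_le_of_le_one hw₀ hw₁ two_ne_zero)

lemma le_sqrt_add_of_sq_le_add_mul {r B C : ℝ} (hB : 0 ≤ B) (h : r ^ 2 ≤ C + r * B) :
    r ≤ √C + B := by
  by_contra! hlt
  have hsqrt : √C < r - B := by linarith
  have hC : C < (r - B) ^ 2 := Real.lt_sq_of_sqrt_lt hsqrt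
  nlinarith [(Real.sqrt_nonneg C).trans_lt hsqrt]

section DifferentialInequality

variable {E : Type*} [NormedAddCommGroup E] [NormedSpace ℝ E]

lemma abs_le_norm_of_hasDerivWithinAt_norm {f : ℝ → E} {f' : E} {d x : ℝ}
    (hf : HasDerivWithinAt f f' (Ioi x) x)
    (hd : HasDerivWithinAt (fun y ↦ ‖f y‖) d (Ioi x) x) : |d| ≤ ‖f'‖ := by
  rw [hasDerivWithinAt_iff_tendsto_slope' self_notMem_Ioi] at hf hd
  refine le_of_tendsto_of_tendsto' hd.abs hf.norm fun y ↦ ?_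
  simp only [slope, vsub_eq_sub, norm_smul, smul_eq_mul, abs_mul, Real.norm_eq_abs]
  gcongr
  exact abs_norm_sub_norm_le _ _

lemma exists_hasDerivWithinAt_norm_Ioi {f : ℝ → E} {f' : E} {x : ℝ}
    (hf : HasDerivWithinAt f f' (Ioi x) x) :
    ∃ d, HasDerivWithinAt (fun y ↦ ‖f y‖) d (Ioi x) x := by
  let tangent : ℝ →ᵃ[ℝ] E := AffineMap.lineMap (f x - x • f') (f x - x • f' + f')
  have htangent (y : ℝ) : tangent y = f x + (y - x) • f' := by
    simp only [tangent, AffineMap.lineMap_apply_module', add_sub_cancel_left]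
    module
  have hnorm_tangent : HasDerivWithinAt (fun y ↦ ‖tangent y‖) _ (Ioi x) x :=
    (convexOn_univ_norm.comp_affineMap tangent).hasDerivWithinAt_rightDeriv_of_mem_interior
      (by simp)
  have hdiff : HasDerivWithinAt (fun y ↦ ‖f y‖ - ‖tangent y‖) 0 (Ioi x) x := by
    rw [hasDerivWithinAt_iff_isLittleO] at hf ⊢
    refine (Asymptotics.isBigO_of_le _ fun y ↦ ?_).trans_isLittleO hf
    simpa [htangent, sub_sub] using abs_norm_sub_norm_le (f y) (tangent y)
  exact ⟨_, (hdiff.add hnorm_tangent).congr_of_eventuallyEq (.of_forall fun y ↦ by simp) (by simp)⟩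

variable {f f' : ℝ → E} {θ₁ θ₂ : ℝ → ℝ} {a b γ : ℝ}

lemma exp_mul_norm_le_add_setIntegral {k : ℝ → ℝ} (hab : a ≤ b) (hf : ContinuousOn f (Icc a b))
    (hf' : ∀ x ∈ Ioo a b, HasDerivWithinAt f (f' x) (Ioi x) x) (hk : IntegrableOn k (Ioo a b))
    (hbound : ∀ x ∈ Ioo a b, ‖f' x‖ ≤ k x + γ * ‖f x‖) :
    Real.exp (γ * (a - b)) * ‖f a‖ ≤
      ‖f b‖ + ∫ x in Ioo a b, Real.exp (γ * (x - b)) * k x := by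
  have hnorm : ∀ x ∈ Ioo a b, ∃ d, HasDerivWithinAt (fun y ↦ ‖f y‖) d (Ioi x) x :=
    fun x hx ↦ exists_hasDerivWithinAt_norm_Ioi (hf' x hx)
  choose! d hd using hnorm
  have hweight (x : ℝ) : HasDerivAt (fun y ↦ Real.exp (γ * (y - b)))
      (Real.exp (γ * (x - b)) * γ) x := by
    simpa using (((hasDerivAt_id x).sub_const b).const_mul γ).exp
  have hint : IntegrableOn (fun x ↦ Real.exp (γ * (x - b)) * k x) (Icc a b) :=
    ((integrableOn_Icc_iff_integrableOn_Ioo ..).2 hk).continuousOn_mul (by fun_prop) isCompact_Icc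
  have hgrowth := intervalIntegral.sub_le_integral_of_hasDeriv_right_of_le hab
    (g := fun x ↦ -(Real.exp (γ * (x - b)) * ‖f x‖)) (by fun_prop)
    (fun x hx ↦ ((hweight x).hasDerivWithinAt.mul (hd x hx)).neg) hint fun x hx ↦ by
      have hlower : -d x ≤ k x + γ * ‖f x‖ :=
        (neg_le_abs _).trans <|
          (abs_le_norm_of_hasDerivWithinAt_norm (hf' x hx) (hd x hx)).trans (hbound x hx)
      linarith [mul_le_mul_of_nonneg_left hlower (Real.exp_pos (γ * (x - b))).le]
  rw [intervalIntegral.integral_of_le hab, integral_Ioc_eq_integral_Ioo] at hgrowth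
  simp only [sub_self, mul_zero, Real.exp_zero, one_mul] at hgrowth
  linarith

lemma exp_mul_norm_le_add_mul_setIntegral {r : ℝ} (hab : a ≤ b) (hf : ContinuousOn f (Icc a b))
    (hf' : ∀ x ∈ Ioo a b, HasDerivWithinAt f (f' x) (Ioi x) x)
    (hθ₁ : ∀ x ∈ Ioo a b, 0 ≤ θ₁ x) (hθ₂ : ∀ x ∈ Ioo a b, 0 ≤ θ₂ x)
    (hθ₁int : IntegrableOn θ₁ (Ioo a b)) (hθ₂int : IntegrableOn θ₂ (Ioo a b)) (hγ : 0 ≤ γ)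
    (hbound : ∀ x ∈ Ioo a b, ‖f' x‖ ≤ θ₁ x + θ₂ x * √‖f x‖ + γ * ‖f x‖)
    (hr : ∀ x ∈ Ioo a b, √(Real.exp (γ * (x - b)) * ‖f x‖) ≤ r) :
    Real.exp (γ * (a - b)) * ‖f a‖ ≤
      ‖f b‖ + (∫ x in Ioo a b, θ₁ x) + r * ∫ x in Ioo a b, θ₂ x := by
  have hk : IntegrableOn (fun x ↦ θ₁ x + θ₂ x * √‖f x‖) (Ioo a b) :=
    hθ₁int.add <| hθ₂int.mul_continuousOn_of_subset hf.norm.sqrt measurableSet_Ioo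
      isCompact_Icc Ioo_subset_Icc_self
  have hweighted : ∀ x ∈ Ioo a b,
      Real.exp (γ * (x - b)) * (θ₁ x + θ₂ x * √‖f x‖) ≤ θ₁ x + r * θ₂ x := by
    intro x hx
    have hexp : Real.exp (γ * (x - b)) ≤ 1 :=
      Real.exp_le_one_iff.2 (mul_nonpos_of_nonneg_of_nonpos hγ (sub_nonpos.2 hx.2.le))
    have hsqrt : Real.exp (γ * (x - b)) * √‖f x‖ ≤ r :=
      (mul_sqrt_le_sqrt_mul (Real.exp_pos _).le hexp _).trans (hr x hx)
    calc Real.exp (γ * (x - b)) * (θ₁ x + θ₂ x * √‖f x‖)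
        = Real.exp (γ * (x - b)) * θ₁ x + Real.exp (γ * (x - b)) * √‖f x‖ * θ₂ x := by ring
      _ ≤ θ₁ x + r * θ₂ x :=
        add_le_add (mul_le_of_le_one_left (hθ₁ x hx) hexp)
          (mul_le_mul_of_nonneg_right hsqrt (hθ₂ x hx))
  calc Real.exp (γ * (a - b)) * ‖f a‖
      ≤ ‖f b‖ + ∫ x in Ioo a b, Real.exp (γ * (x - b)) * (θ₁ x + θ₂ x * √‖f x‖) :=
        exp_mul_norm_le_add_setIntegral hab hf hf' hk hbound
    _ ≤ ‖f b‖ + ∫ x in Ioo a b, (θ₁ x + r * θ₂ x) := by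
        gcongr ‖f b‖ + ?_
        refine setIntegral_mono_on ?_ (hθ₁int.add (hθ₂int.const_mul r)) measurableSet_Ioo hweighted
        exact hk.continuousOn_mul_of_subset (by fun_prop) isCompact_Icc measurableSet_Ioo
          Ioo_subset_Icc_self
    _ = ‖f b‖ + (∫ x in Ioo a b, θ₁ x) + r * ∫ x in Ioo a b, θ₂ x := by
        rw [integral_add hθ₁int (hθ₂int.const_mul r), integral_const_mul, add_assoc]

lemma exp_mul_norm_le_sq (hf : ContinuousOn f (Ioc a b))
    (hf' : ∀ x ∈ Ioo a b, HasDerivWithinAt f (f' x) (Ioi x) x)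
    (hθ₁ : ∀ x ∈ Ioo a b, 0 ≤ θ₁ x) (hθ₂ : ∀ x ∈ Ioo a b, 0 ≤ θ₂ x)
    (hθ₁int : IntegrableOn θ₁ (Ioo a b)) (hθ₂int : IntegrableOn θ₂ (Ioo a b)) (hγ : 0 ≤ γ)
    (hbound : ∀ x ∈ Ioo a b, ‖f' x‖ ≤ θ₁ x + θ₂ x * √‖f x‖ + γ * ‖f x‖)
    {x : ℝ} (hx : x ∈ Ioc a b) :
    Real.exp (γ * (x - b)) * ‖f x‖ ≤
      (√(‖f b‖ + ∫ y in Ioo a b, θ₁ y) + ∫ y in Ioo a b, θ₂ y) ^ 2 := by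
  have hIcc : Icc x b ⊆ Ioc a b := Icc_subset_Ioc hx.1 le_rfl
  have hfx : ContinuousOn f (Icc x b) := hf.mono hIcc
  obtain ⟨m, hm, hmax⟩ := isCompact_Icc.exists_isMaxOn (nonempty_Icc.2 hx.2)
    (f := fun y ↦ Real.exp (γ * (y - b)) * ‖f y‖) (by fun_prop)
  set r := √(Real.exp (γ * (m - b)) * ‖f m‖)
  have hr : r ^ 2 = Real.exp (γ * (m - b)) * ‖f m‖ := Real.sq_sqrt (by positivity)
  have hsub : Ioo m b ⊆ Ioo a b := Ioo_subset_Ioo_left (hIcc hm).1.le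
  have hmono {θ : ℝ → ℝ} (hθ : ∀ y ∈ Ioo a b, 0 ≤ θ y) (hint : IntegrableOn θ (Ioo a b)) :
      ∫ y in Ioo m b, θ y ≤ ∫ y in Ioo a b, θ y :=
    setIntegral_mono_set hint (ae_restrict_of_forall_mem measurableSet_Ioo hθ) hsub.eventuallyLE
  have hquad : r ^ 2 ≤ ‖f b‖ + (∫ y in Ioo a b, θ₁ y) + r * ∫ y in Ioo a b, θ₂ y :=
    calc r ^ 2 ≤ ‖f b‖ + (∫ y in Ioo m b, θ₁ y) + r * ∫ y in Ioo m b, θ₂ y :=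
          hr.trans_le <| exp_mul_norm_le_add_mul_setIntegral hm.2
            (hfx.mono (Icc_subset_Icc_left hm.1)) (fun y hy ↦ hf' y (hsub hy))
            (fun y hy ↦ hθ₁ y (hsub hy)) (fun y hy ↦ hθ₂ y (hsub hy)) (hθ₁int.mono_set hsub)
            (hθ₂int.mono_set hsub) hγ (fun y hy ↦ hbound y (hsub hy))
            fun y hy ↦ Real.sqrt_le_sqrt (hmax ⟨hm.1.trans hy.1.le, hy.2.le⟩)
      _ ≤ ‖f b‖ + (∫ y in Ioo a b, θ₁ y) + r * ∫ y in Ioo a b, θ₂ y := by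
          gcongr ‖f b‖ + ?_ + r * ?_
          exacts [hmono hθ₁ hθ₁int, hmono hθ₂ hθ₂int]
  calc Real.exp (γ * (x - b)) * ‖f x‖ ≤ r ^ 2 := (hmax (left_mem_Icc.2 hx.2)).trans_eq hr.symm
    _ ≤ (√(‖f b‖ + ∫ y in Ioo a b, θ₁ y) + ∫ y in Ioo a b, θ₂ y) ^ 2 := by
      gcongr
      exact le_sqrt_add_of_sq_le_add_mul (setIntegral_nonneg measurableSet_Ioo hθ₂) hquad

theorem method_of_differential_inequality_general
    (hderiv : ∀ x ∈ Ioc a b, HasDerivWithinAt f (f' x) (Ioc a b) x)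
    (hθ₁ : ∀ x ∈ Ioo a b, 0 ≤ θ₁ x) (hθ₂ : ∀ x ∈ Ioo a b, 0 ≤ θ₂ x)
    (hθ₁int : IntegrableOn θ₁ (Ioo a b)) (hθ₂int : IntegrableOn θ₂ (Ioo a b)) (hγ : 0 ≤ γ)
    (hbound : ∀ x ∈ Ioo a b, ‖f' x‖ ≤ θ₁ x + θ₂ x * √‖f x‖ + γ * ‖f x‖) :
    ∀ x ∈ Ioc a b,
      ‖f x‖ ≤ (√(‖f b‖ + ∫ y in Ioo a b, θ₁ y) + ∫ y in Ioo a b, θ₂ y) ^ 2 *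
        Real.exp (γ * (b - a)) := by
  intro x hx
  have hright : ∀ y ∈ Ioo a b, HasDerivWithinAt f (f' y) (Ioi y) y := fun y hy ↦
    (hderiv y (Ioo_subset_Ioc_self hy)).mono_of_mem_nhdsWithin
      (mem_nhdsWithin_of_mem_nhds (Ioc_mem_nhds hy.1 hy.2))
  calc ‖f x‖ = Real.exp (γ * (x - b)) * ‖f x‖ * Real.exp (γ * (b - x)) := by
        rw [mul_right_comm, ← Real.exp_add, ← mul_add, sub_add_sub_cancel, sub_self, mul_zero,
          Real.exp_zero, one_mul]
    _ ≤ (√(‖f b‖ + ∫ y in Ioo a b, θ₁ y) + ∫ y in Ioo a b, θ₂ y) ^ 2 *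
          Real.exp (γ * (b - a)) := by
        gcongr
        · exact exp_mul_norm_le_sq (fun y hy ↦ (hderiv y hy).continuousWithinAt) hright
            hθ₁ hθ₂ hθ₁int hθ₂int hγ hbound hx
        · exact hx.1.le

end DifferentialInequality

/-- Method of differential inequality: if `Φ : (0, ε₀] → B(𝓗)` is continuously
differentiable with `‖Φ'(ε)‖ ≤ θ₁(ε) + θ₂(ε)·‖Φ(ε)‖^{1/2} + γ·‖Φ(ε)‖`, where the
`θ_k ≥ 0` are integrable on `(0, ε₀)` and `γ ≥ 0`, then
`‖Φ(ε)‖ ≤ ((‖Φ(ε₀)‖ + ∫₀^{ε₀} θ₁)^{1/2} + ∫₀^{ε₀} θ₂)² · e^{γ ε₀}` for all `ε ∈ (0, ε₀]`. -/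
theorem method_of_differential_inequality
    {𝓗 : Type*} [NormedAddCommGroup 𝓗] [InnerProductSpace ℂ 𝓗]
    (ε₀ : ℝ) (hε₀ : 0 < ε₀)
    (Φ Φ' : ℝ → (𝓗 →L[ℂ] 𝓗))
    (hderiv : ∀ ε ∈ Ioc (0 : ℝ) ε₀, HasDerivWithinAt Φ (Φ' ε) (Ioc (0 : ℝ) ε₀) ε)
    (hcont : ContinuousOn Φ' (Ioc (0 : ℝ) ε₀))
    (θ₁ θ₂ : ℝ → ℝ) (hθ₁meas : Measurable θ₁) (hθ₂meas : Measurable θ₂)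
    (hθ₁nonneg : ∀ ε ∈ Ioo (0 : ℝ) ε₀, 0 ≤ θ₁ ε)
    (hθ₂nonneg : ∀ ε ∈ Ioo (0 : ℝ) ε₀, 0 ≤ θ₂ ε)
    (hθ₁int : IntegrableOn θ₁ (Ioo (0 : ℝ) ε₀))
    (hθ₂int : IntegrableOn θ₂ (Ioo (0 : ℝ) ε₀))
    (γ : ℝ) (hγ : 0 ≤ γ)
    (hineq : ∀ ε ∈ Ioo (0 : ℝ) ε₀,
      ‖Φ' ε‖ ≤ θ₁ ε + θ₂ ε * Real.sqrt ‖Φ ε‖ + γ * ‖Φ ε‖) :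
    ∀ ε ∈ Ioc (0 : ℝ) ε₀,
      ‖Φ ε‖ ≤ (Real.sqrt (‖Φ ε₀‖ + ∫ ε' in Ioo (0 : ℝ) ε₀, θ₁ ε') +
          ∫ ε' in Ioo (0 : ℝ) ε₀, θ₂ ε') ^ 2 * Real.exp (γ * ε₀) := by
  simpa only [sub_zero] using method_of_differential_inequality_general hderiv hθ₁nonneg hθ₂nonneg
    hθ₁int hθ₂int hγ hineq
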